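/- Let C be a finite class of functions from {-1,1}^n to {-1,1}, let ε, δ > 0, let f: {-1,1}^n → {-1,1}, let N = ⌈n ln(n|C|/δ)⌉, let m ≥ (2N/ε²) ln(2N|C|/δ), and let S = (x^i, f(x^i))_{i=1,…,m} be a random walk of length m on {-1,1}^n labeled by f. Then with probability at least 1 − δ, for every h ∈ C, |Δ(h,S) − Δ(h,f)| ≤ ε. -/

import Mathlib

/-!
The proof is a spectral Chernoff bound for the walk. Fix `h` and let `ψ = 1[h ≠ f] - Δ(h, f)`, a
function of mean zero on the cube. The exponential moment of `∑ₜ ψ(xᵗ)` is controlled by the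
tilted operator `e^{θψ/2} P e^{θψ/2}`, where `P` is the transition operator of the walk. By the
Poincaré inequality (`poincare_cube`) `P` has all eigenvalues on mean-zero functions at most
`1 - 2/n`, and a perturbation argument with `n θ ≤ 4/5` bounds the top eigenvalue of the tilted
operator by `1 + (2/5) n θ²` (`stepForm_self_le`).

The walk is periodic, so `P` also has the eigenvalue `-1`, and the walk never mixes. This does not
matter: the tilted operator has nonnegative entries, so its norm is attained at its largest
eigenvalue (`neg_stepForm_self_le`, `stepForm_le`). Iterating the norm bound along the walk
(`weighted_pathSum_le`) and applying Markov's inequality with `θ = (4/5) ε / n` shows that a fixed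
`h` deviates by more than `ε` with probability at most `2 exp (-m ε² / (2n))` (`bad_card_le`).

Finally, `n log (n|C|/δ) > n - 1` when `δ < 1` and `C` is nonempty, hence `N ≥ n`, and the lower
bound on `m` makes this probability at most `δ / |C|`; a union bound over `C` finishes the proof.
-/

noncomputable section

/-- `rwPoint x0 idx t` is the position of the random walk on `{-1,1}^n` after `t` steps,
starting from `x0`, where the `(t+1)`-st step flips coordinate `idx t`. -/
def rwPoint {n : ℕ} (x0 : Fin n → Bool) (idx : ℕ → Fin n) : ℕ → Fin n → Bool
  | 0 => x0
  | t + 1 => Function.update (rwPoint x0 idx t) (idx t) (!(rwPoint x0 idx t (idx t)))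

/-- The point `x^{t+1}` of the random walk `x^1, …, x^m` encoded by
`ω = (x^1, (i_1, …, i_m))` (only the step coordinates `i_2, …, i_m` are used). -/
def walkOf {n m : ℕ} (hm1 : 1 ≤ m) (ω : (Fin n → Bool) × (Fin m → Fin n)) (t : ℕ) :
    Fin n → Bool :=
  rwPoint ω.1 (fun s => if h : s + 1 < m then ω.2 ⟨s + 1, h⟩ else ω.2 ⟨0, by omega⟩) t

/-- `Δ(h, S)`: the fraction of the `m` examples of the labeled random walk encoded by `ω`
on which `h` disagrees with the labeling function `f`. -/
def sampleDist {n m : ℕ} (hm1 : 1 ≤ m) (f h : (Fin n → Bool) → Bool)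
    (ω : (Fin n → Bool) × (Fin m → Fin n)) : ℝ :=
  (1 / (m : ℝ)) *
    (((Finset.range m).filter
      (fun t => h (walkOf hm1 ω t) ≠ f (walkOf hm1 ω t))).card : ℝ)

/-- `Δ(h, f) = Pr_x[h(x) ≠ f(x)]` for uniform `x ∈ {-1,1}^n`. -/
def cubeDist {n : ℕ} (h f : (Fin n → Bool) → Bool) : ℝ :=
  ((Finset.univ.filter (fun z : Fin n → Bool => h z ≠ f z)).card : ℝ) / 2 ^ n

/-! ### The Poincaré inequality on the cube -/

/-- The point `x` with its `i`-th coordinate flipped. -/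
def flipAt {n : ℕ} (x : Fin n → Bool) (i : Fin n) : Fin n → Bool :=
  Function.update x i (!(x i))

lemma flipAt_flipAt {n : ℕ} (x : Fin n → Bool) (i : Fin n) : flipAt (flipAt x i) i = x := by
  simp [flipAt]

lemma sum_flipAt {n : ℕ} (i : Fin n) (F : (Fin n → Bool) → ℝ) :
    ∑ x, F (flipAt x i) = ∑ x, F x :=
  Equiv.sum_comp (Function.Involutive.toPerm (fun x => flipAt x i) (fun x => flipAt_flipAt x i)) F

lemma sum_cube_succ {n : ℕ} (F : (Fin (n + 1) → Bool) → ℝ) :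
    ∑ x, F x = ∑ y : Fin n → Bool, F (Fin.cons false y)
      + ∑ y : Fin n → Bool, F (Fin.cons true y) := by
  rw [← (Fin.consEquiv (fun _ : Fin (n + 1) => Bool)).sum_comp, Fintype.sum_prod_type,
    Fintype.sum_bool, add_comm]
  rfl

lemma flipAt_cons_zero {n : ℕ} (b : Bool) (y : Fin n → Bool) :
    flipAt (Fin.cons b y : Fin (n + 1) → Bool) 0 = Fin.cons (!b) y := by
  simp [flipAt]

lemma flipAt_cons_succ {n : ℕ} (b : Bool) (y : Fin n → Bool) (i : Fin n) :
    flipAt (Fin.cons b y : Fin (n + 1) → Bool) i.succ = Fin.cons b (flipAt y i) := by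
  simp [flipAt, Fin.cons_update]

/-- The Poincaré inequality `Var u ≤ (1/4) ∑ᵢ E (u(x) - u(x ⊙ eᵢ))²`, multiplied by `4 · 2^{2n}`.
The induction on the dimension splits the cube along its first coordinate; the difference of the
two half-sums is controlled by Cauchy–Schwarz. -/
lemma poincare_cube (n : ℕ) (u : (Fin n → Bool) → ℝ) :
    4 * ((2 : ℝ) ^ n * ∑ x, u x ^ 2 - (∑ x, u x) ^ 2)
      ≤ 2 ^ n * ∑ i, ∑ x, (u x - u (flipAt x i)) ^ 2 := by
  induction n with
  | zero => simp
  | succ n ih =>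
    have h0 := ih (fun y => u (Fin.cons false y))
    have h1 := ih (fun y => u (Fin.cons true y))
    have hcs : (∑ y : Fin n → Bool, (u (Fin.cons false y) - u (Fin.cons true y))) ^ 2
        ≤ 2 ^ n * ∑ y : Fin n → Bool, (u (Fin.cons false y) - u (Fin.cons true y)) ^ 2 := by
      have := sq_sum_le_card_mul_sum_sq (s := (Finset.univ : Finset (Fin n → Bool)))
        (f := fun y => u (Fin.cons false y) - u (Fin.cons true y))
      simpa using this
    have hsymm : ∑ y : Fin n → Bool, (u (Fin.cons true y) - u (Fin.cons false y)) ^ 2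
        = ∑ y : Fin n → Bool, (u (Fin.cons false y) - u (Fin.cons true y)) ^ 2 :=
      Finset.sum_congr rfl fun y _ => by ring
    rw [Finset.sum_sub_distrib] at hcs
    rw [Fin.sum_univ_succ]
    simp only [sum_cube_succ, flipAt_cons_zero, flipAt_cons_succ, Bool.not_false, Bool.not_true,
      Finset.sum_add_distrib, pow_succ (2 : ℝ) n]
    rw [hsymm]
    linarith

/-! ### The tilted transition operator -/

/-- The unnormalised transition form `B(v, w) = ∑ₓ ∑ᵢ v(x) w(x ⊙ eᵢ)`. -/
def stepForm {n : ℕ} (v w : (Fin n → Bool) → ℝ) : ℝ := ∑ x, ∑ i, v x * w (flipAt x i)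

lemma sum_sub_flip_sq {n : ℕ} (w : (Fin n → Bool) → ℝ) :
    ∑ i, ∑ x, (w x - w (flipAt x i)) ^ 2 = 2 * n * ∑ x, w x ^ 2 - 2 * stepForm w w := by
  have h : ∀ i : Fin n, ∑ x, (w x - w (flipAt x i)) ^ 2
      = 2 * ∑ x, w x ^ 2 - 2 * ∑ x, w x * w (flipAt x i) := by
    intro i
    have h2 := sum_flipAt i (fun x => w x ^ 2)
    calc ∑ x, (w x - w (flipAt x i)) ^ 2
        = ∑ x, (w x ^ 2 + w (flipAt x i) ^ 2 - 2 * (w x * w (flipAt x i))) :=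
          Finset.sum_congr rfl fun x _ => by ring
      _ = _ := by
          rw [Finset.sum_sub_distrib, Finset.sum_add_distrib, h2, ← Finset.mul_sum]; ring
  have h3 : stepForm w w = ∑ i, ∑ x, w x * w (flipAt x i) := Finset.sum_comm
  rw [h3, Finset.sum_congr rfl fun i _ => h i, Finset.sum_sub_distrib, Finset.sum_const,
    Finset.card_univ, Fintype.card_fin, nsmul_eq_mul, ← Finset.mul_sum]
  ring

/-- A test function on the cube: mean zero, bounded by one, variance at most `1/4`. -/
structure Centered {n : ℕ} (ψ : (Fin n → Bool) → ℝ) : Prop where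
  sum_zero : ∑ x, ψ x = 0
  abs_le : ∀ x, |ψ x| ≤ 1
  sum_sq : ∑ x, ψ x ^ 2 ≤ 2 ^ n / 4

/-- The largest eigenvalue of the tilted operator `e^{θψ/2} P e^{θψ/2}` is at most
`1 + (2/5) n θ²`, stated for the quadratic form of `P` after the substitution
`w = e^{θψ/2} v`. Splitting `w` into its mean and a fluctuation, the spectral gap `2/n` of `P`
(the Poincaré inequality) absorbs the fluctuation terms as long as `n θ ≤ 4/5`. -/
lemma stepForm_self_le {n : ℕ} (hn : 1 ≤ n) {ψ : (Fin n → Bool) → ℝ} (hψ : Centered ψ)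
    {θ : ℝ} (hθ0 : 0 ≤ θ) (hθ : n * θ ≤ 4 / 5) (w : (Fin n → Bool) → ℝ) :
    stepForm w w ≤ n * (1 + 2 / 5 * n * θ ^ 2) * ∑ x, Real.exp (-(θ * ψ x)) * w x ^ 2 := by
  have hn' : (1 : ℝ) ≤ n := by exact_mod_cast hn
  set K : ℝ := 1 + 2 / 5 * n * θ ^ 2 with hK
  set V : ℝ := 2 ^ n with hV
  have hVpos : 0 < V := by positivity
  set a : ℝ := (∑ x, w x) / V with ha
  set U : ℝ := ∑ x, (w x - a) ^ 2 with hU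
  set E₁ : ℝ := ∑ x, ψ x * (w x - a) with hE₁
  set E₂ : ℝ := ∑ x, ψ x * (w x - a) ^ 2 with hE₂
  have hcard : ∑ _x : Fin n → Bool, (1 : ℝ) = V := by simp [hV]
  have hS : ∑ x, w x = V * a := by rw [ha]; field_simp
  have hw2 : ∑ x, w x ^ 2 = V * a ^ 2 + U := by
    have : U = ∑ x, w x ^ 2 - 2 * a * ∑ x, w x + a ^ 2 * ∑ _x : Fin n → Bool, (1 : ℝ) := by
      rw [hU, Finset.mul_sum, Finset.mul_sum, ← Finset.sum_sub_distrib, ← Finset.sum_add_distrib]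
      exact Finset.sum_congr rfl fun x _ => by ring
    rw [this, hcard, hS]; ring
  have hψw : ∑ x, ψ x * w x ^ 2 = 2 * a * E₁ + E₂ := by
    have : ∑ x, ψ x * w x ^ 2 = 2 * a * E₁ + E₂ + a ^ 2 * ∑ x, ψ x := by
      rw [hE₁, hE₂, Finset.mul_sum, Finset.mul_sum, ← Finset.sum_add_distrib,
        ← Finset.sum_add_distrib]
      exact Finset.sum_congr rfl fun x _ => by ring
    rw [this, hψ.sum_zero]; ring
  have hU0 : 0 ≤ U := Finset.sum_nonneg fun x _ => sq_nonneg _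
  have hE₂le : E₂ ≤ U := Finset.sum_le_sum fun x _ => by
    nlinarith [(abs_le.mp (hψ.abs_le x)).2, sq_nonneg (w x - a)]
  have hE₁le : E₁ ^ 2 ≤ V / 4 * U :=
    (Finset.sum_mul_sq_le_sq_mul_sq _ _ _).trans
      (mul_le_mul_of_nonneg_right hψ.sum_sq hU0)
  -- the eigenvalues of `P` off the constants are at most `1 - 2 / n`; no lower bound is needed
  have hgap : stepForm w w ≤ n * V * a ^ 2 + (n - 2) * U := by
    have h := poincare_cube n w
    rw [sum_sub_flip_sq, hS, hw2, ← hV] at h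
    have h2 : V * (4 * U) ≤ V * (2 * n * (V * a ^ 2 + U) - 2 * stepForm w w) := by nlinarith [h]
    have := le_of_mul_le_mul_left h2 hVpos
    linarith
  have hexp : V * a ^ 2 + U - θ * (2 * a * E₁ + E₂)
      ≤ ∑ x, Real.exp (-(θ * ψ x)) * w x ^ 2 := by
    rw [← hψw, ← hw2, Finset.mul_sum, ← Finset.sum_sub_distrib]
    refine Finset.sum_le_sum fun x _ => ?_
    have := Real.add_one_le_exp (-(θ * ψ x))
    nlinarith [sq_nonneg (w x)]
  have hK1 : 1 ≤ K := by rw [hK]; nlinarith [mul_nonneg (by linarith : (0 : ℝ) ≤ n) (sq_nonneg θ)]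
  -- the cross term between mean and fluctuation, by AM-GM
  have hcross : n * K * θ * (2 * a * E₁) ≤ n * (K - 1) * V * a ^ 2 + 5 / 8 * K ^ 2 * U := by
    have h1 : 5 / 2 * (K ^ 2 * E₁ ^ 2 / V) ≤ 5 / 8 * K ^ 2 * U := by
      have : K ^ 2 * E₁ ^ 2 / V ≤ K ^ 2 * U / 4 := by
        rw [div_le_iff₀ hVpos]
        nlinarith [mul_le_mul_of_nonneg_left hE₁le (sq_nonneg K)]
      linarith
    have h2 : n * (K - 1) * V * a ^ 2 + 5 / 2 * (K ^ 2 * E₁ ^ 2 / V) - n * K * θ * (2 * a * E₁)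
        = 5 / 2 * V * (2 / 5 * n * θ * a - K * E₁ / V) ^ 2 := by
      have : K - 1 = 2 / 5 * n * θ ^ 2 := by rw [hK]; ring
      rw [this]; field_simp; ring
    have h3 : 0 ≤ 5 / 2 * V * (2 / 5 * n * θ * a - K * E₁ / V) ^ 2 := by positivity
    linarith
  have hnum : 0 ≤ n * K - n + 2 - n * K * θ - 5 / 8 * K ^ 2 := by
    set τ : ℝ := n * θ with hτ
    have hτ0 : 0 ≤ τ := by positivity
    have hnK : n * K = n + 2 / 5 * τ ^ 2 := by rw [hK, hτ]; ring
    have hKle : K ≤ 1 + 2 / 5 * τ ^ 2 := by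
      have : n * θ ^ 2 ≤ τ ^ 2 := by rw [hτ]; nlinarith [sq_nonneg θ]
      rw [hK]; linarith
    have hτ2 : τ ^ 2 ≤ 16 / 25 := by nlinarith only [hτ0, hθ]
    have hτ3 : τ ^ 3 ≤ τ ^ 2 := by nlinarith only [hτ0, hθ, sq_nonneg τ]
    have hKle2 : K ≤ 157 / 125 := by linarith
    have hKsq : K ^ 2 ≤ (157 / 125) ^ 2 := by gcongr
    have h1 : n * K * θ = K * τ := by rw [hτ]; ring
    have h2 : K * τ ≤ τ + 2 / 5 * τ ^ 3 := by
      nlinarith only [mul_le_mul_of_nonneg_right hKle hτ0]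
    rw [h1, hnK]
    linarith
  have hnK0 : 0 ≤ n * K := by positivity
  have h5 := mul_le_mul_of_nonneg_left hexp hnK0
  have h6 : n * K * θ * E₂ ≤ n * K * θ * U :=
    mul_le_mul_of_nonneg_left hE₂le (by positivity)
  have h7 := mul_nonneg hnum hU0
  linarith

lemma stepForm_add_self_sub {n : ℕ} (v w : (Fin n → Bool) → ℝ) :
    stepForm (fun x => v x + w x) (fun x => v x + w x)
      - stepForm (fun x => v x - w x) (fun x => v x - w x) = 4 * stepForm v w := by
  have hsymm : stepForm w v = stepForm v w := by
    unfold stepForm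
    refine Finset.sum_comm.trans (Eq.trans (Finset.sum_congr rfl fun i _ => ?_) Finset.sum_comm)
    rw [← sum_flipAt i]
    exact Finset.sum_congr rfl fun x _ => by rw [flipAt_flipAt]; ring
  have : stepForm (fun x => v x + w x) (fun x => v x + w x)
      - stepForm (fun x => v x - w x) (fun x => v x - w x)
      = 2 * stepForm v w + 2 * stepForm w v := by
    unfold stepForm
    simp only [Finset.mul_sum, ← Finset.sum_sub_distrib, ← Finset.sum_add_distrib]
    exact Finset.sum_congr rfl fun x _ => Finset.sum_congr rfl fun i _ => by ring
  rw [this, hsymm]; ring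

/-- Since the transition form has nonnegative coefficients, replacing `w` by `|w|` shows that its
negative part is no larger than its positive part, so the eigenvalue `-1` coming from the
periodicity of the walk does no harm. -/
lemma neg_stepForm_self_le {n : ℕ} (w : (Fin n → Bool) → ℝ) :
    -stepForm w w ≤ stepForm (fun x => |w x|) (fun x => |w x|) := by
  unfold stepForm
  rw [← Finset.sum_neg_distrib]
  refine Finset.sum_le_sum fun x _ => ?_
  rw [← Finset.sum_neg_distrib]
  exact Finset.sum_le_sum fun i _ => by rw [← abs_mul]; exact neg_le_abs _

/-- The bilinear version of `stepForm_self_le`, by polarisation. -/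
lemma stepForm_le {n : ℕ} (hn : 1 ≤ n) {ψ : (Fin n → Bool) → ℝ} (hψ : Centered ψ)
    {θ : ℝ} (hθ0 : 0 ≤ θ) (hθ : n * θ ≤ 4 / 5) (v w : (Fin n → Bool) → ℝ) :
    2 * stepForm v w ≤ n * (1 + 2 / 5 * n * θ ^ 2) *
      (∑ x, Real.exp (-(θ * ψ x)) * v x ^ 2 + ∑ x, Real.exp (-(θ * ψ x)) * w x ^ 2) := by
  have h1 := stepForm_self_le hn hψ hθ0 hθ (fun x => v x + w x)
  have h2 := (neg_stepForm_self_le (fun x => v x - w x)).trans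
    (stepForm_self_le hn hψ hθ0 hθ _)
  have h3 := stepForm_add_self_sub v w
  simp only [sq_abs] at h2
  have h4 : ∑ x, Real.exp (-(θ * ψ x)) * (v x + w x) ^ 2
      + ∑ x, Real.exp (-(θ * ψ x)) * (v x - w x) ^ 2
      = 2 * (∑ x, Real.exp (-(θ * ψ x)) * v x ^ 2 + ∑ x, Real.exp (-(θ * ψ x)) * w x ^ 2) := by
    rw [← Finset.sum_add_distrib, ← Finset.sum_add_distrib, Finset.mul_sum]
    exact Finset.sum_congr rfl fun x _ => by ring
  set K' := (n : ℝ) * (1 + 2 / 5 * n * θ ^ 2)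
  have h5 := congrArg (fun r => K' * r) h4
  simp only [mul_add] at h5 ⊢
  linarith

/-! ### The exponential moment of the walk -/

/-- `pathSum g k x` is the sum of `∏ g` over all walks with `k + 1` points started at `x`. -/
def pathSum {n : ℕ} (g : (Fin n → Bool) → ℝ) : ℕ → (Fin n → Bool) → ℝ
  | 0 => g
  | k + 1 => fun x => g x * ∑ i, pathSum g k (flipAt x i)

lemma rwPoint_succ' {n : ℕ} (x : Fin n → Bool) (idx : ℕ → Fin n) (t : ℕ) :
    rwPoint x idx (t + 1) = rwPoint (flipAt x (idx 0)) (fun s => idx (s + 1)) t := by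
  induction t with
  | zero => rfl
  | succ t ih => rw [rwPoint, ih]; rfl

lemma sum_walks_eq_pathSum {n : ℕ} (g : (Fin n → Bool) → ℝ) (d : Fin n) (k : ℕ)
    (x : Fin n → Bool) :
    ∑ j : Fin k → Fin n, ∏ t ∈ Finset.range (k + 1),
        g (rwPoint x (fun s => if h : s < k then j ⟨s, h⟩ else d) t)
      = pathSum g k x := by
  induction k generalizing x with
  | zero => simp [pathSum, rwPoint]
  | succ k ih =>
    rw [← (Fin.consEquiv (fun _ : Fin (k + 1) => Fin n)).sum_comp, Fintype.sum_prod_type]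
    simp only [pathSum, Finset.mul_sum]
    refine Finset.sum_congr rfl fun a _ => ?_
    rw [← ih (flipAt x a), Finset.mul_sum]
    refine Finset.sum_congr rfl fun j _ => ?_
    rw [Finset.prod_range_succ', mul_comm]
    congr 1
    refine Finset.prod_congr rfl fun t _ => ?_
    rw [rwPoint_succ']
    congr 2
    funext s
    by_cases h : s < k
    · simp only [h, dite_true, Nat.succ_lt_succ h]
      rfl
    · simp [h]

/-- The sum over the encoding space of `∏ₜ g(xᵗ)`; the factor `n` counts the values of the step
coordinate that the walk does not use. -/
lemma sum_walkOf {n k : ℕ} (hm1 : 1 ≤ k + 1) (g : (Fin n → Bool) → ℝ) :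
    ∑ ω : (Fin n → Bool) × (Fin (k + 1) → Fin n),
        ∏ t ∈ Finset.range (k + 1), g (walkOf hm1 ω t)
      = n * ∑ x, pathSum g k x := by
  rw [Fintype.sum_prod_type, Finset.mul_sum]
  refine Finset.sum_congr rfl fun x _ => ?_
  rw [← (Fin.consEquiv (fun _ : Fin (k + 1) => Fin n)).sum_comp, Fintype.sum_prod_type]
  have : ∀ a : Fin n, ∑ j : Fin k → Fin n, ∏ t ∈ Finset.range (k + 1),
      g (walkOf hm1 (x, (Fin.consEquiv (fun _ : Fin (k + 1) => Fin n)) (a, j)) t)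
      = pathSum g k x := by
    intro a
    rw [← sum_walks_eq_pathSum g a k x]
    refine Finset.sum_congr rfl fun j _ => Finset.prod_congr rfl fun t _ => ?_
    unfold walkOf
    congr 2
    funext s
    by_cases h : s < k
    · simp only [h, dite_true, Nat.succ_lt_succ h]
      rfl
    · simp [h]
  exact (Finset.sum_congr rfl fun a _ => this a).trans (by simp)

/-- In the norm weighted by `e^{-θψ}`, each step multiplies `pathSum` by at most `n K`,
with `K = 1 + (2/5) n θ²`. -/
lemma weighted_pathSum_le {n : ℕ} (hn : 1 ≤ n) {ψ : (Fin n → Bool) → ℝ} (hψ : Centered ψ)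
    {θ : ℝ} (hθ0 : 0 ≤ θ) (hθ : n * θ ≤ 4 / 5) (k : ℕ) :
    ∑ x, Real.exp (-(θ * ψ x)) * pathSum (fun x => Real.exp (θ * ψ x)) k x ^ 2
      ≤ (n * (1 + 2 / 5 * n * θ ^ 2)) ^ (2 * k) * ∑ x, Real.exp (θ * ψ x) := by
  set L : ℝ := n * (1 + 2 / 5 * n * θ ^ 2) with hL
  have hLpos : 0 < L := by
    have : (0 : ℝ) < n := by exact_mod_cast hn
    positivity
  set g : (Fin n → Bool) → ℝ := fun x => Real.exp (θ * ψ x) with hg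
  have hcancel : ∀ x, Real.exp (-(θ * ψ x)) * g x = 1 := fun x => by
    rw [hg, ← Real.exp_add]; simp
  induction k with
  | zero =>
    simp only [pathSum, mul_zero, pow_zero, one_mul]
    exact (Finset.sum_congr rfl fun x _ => by rw [pow_two, ← mul_assoc, hcancel, one_mul]).le
  | succ k ih =>
    set F := pathSum g k
    set F' := pathSum g (k + 1) with hF'
    have hq : ∑ x, Real.exp (-(θ * ψ x)) * F' x ^ 2 = stepForm F' F := by
      unfold stepForm
      refine Finset.sum_congr rfl fun x _ => ?_
      rw [← Finset.mul_sum, pow_two]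
      nth_rewrite 2 [hF']
      simp only [pathSum]
      calc _ = (Real.exp (-(θ * ψ x)) * g x) * (F' x * ∑ i, pathSum g k (flipAt x i)) := by ring
        _ = _ := by rw [hcancel, one_mul]
    -- scaling `F` by `L` balances the two terms of the polarised bound
    have hs := stepForm_le hn hψ hθ0 hθ F' (fun x => L * F x)
    have h1 : stepForm F' (fun x => L * F x) = L * stepForm F' F := by
      unfold stepForm
      simp only [Finset.mul_sum]
      exact Finset.sum_congr rfl fun x _ => Finset.sum_congr rfl fun i _ => by ring
    have h2 : ∑ x, Real.exp (-(θ * ψ x)) * (L * F x) ^ 2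
        = L ^ 2 * ∑ x, Real.exp (-(θ * ψ x)) * F x ^ 2 := by
      rw [Finset.mul_sum]
      exact Finset.sum_congr rfl fun x _ => by ring
    rw [h1, h2, ← hL, ← hq] at hs
    have hs2 : ∑ x, Real.exp (-(θ * ψ x)) * F' x ^ 2
        ≤ L ^ 2 * ∑ x, Real.exp (-(θ * ψ x)) * F x ^ 2 := by
      refine le_of_mul_le_mul_left ?_ hLpos
      linarith
    refine hs2.trans ?_
    calc _ ≤ L ^ 2 * (L ^ (2 * k) * ∑ x, g x) := by gcongr
      _ = _ := by ring

lemma sum_exp_le {n : ℕ} (hn : 1 ≤ n) {ψ : (Fin n → Bool) → ℝ} (hψ : Centered ψ)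
    {θ : ℝ} (hθ0 : 0 ≤ θ) (hθ : n * θ ≤ 4 / 5) :
    ∑ x, Real.exp (θ * ψ x) ≤ 2 ^ n * (1 + 2 / 5 * n * θ ^ 2) := by
  have hn' : (1 : ℝ) ≤ n := by exact_mod_cast hn
  have hθ1 : θ ≤ 1 := by nlinarith
  have h : ∀ x, Real.exp (θ * ψ x) ≤ 1 + θ * ψ x + θ ^ 2 * ψ x ^ 2 := by
    intro x
    have h1 : |θ * ψ x| ≤ 1 := by
      rw [abs_mul, abs_of_nonneg hθ0]
      nlinarith [hψ.abs_le x, abs_nonneg (ψ x)]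
    have := (abs_le.mp (Real.abs_exp_sub_one_sub_id_le h1)).2
    nlinarith
  calc ∑ x, Real.exp (θ * ψ x) ≤ ∑ x, (1 + θ * ψ x + θ ^ 2 * ψ x ^ 2) :=
        Finset.sum_le_sum fun x _ => h x
    _ = 2 ^ n + θ * ∑ x, ψ x + θ ^ 2 * ∑ x, ψ x ^ 2 := by
        simp [Finset.sum_add_distrib, Finset.mul_sum]
    _ ≤ 2 ^ n * (1 + 2 / 5 * n * θ ^ 2) := by
        rw [hψ.sum_zero]
        have h2 : (0 : ℝ) < 2 ^ n := by positivity
        have h3 := mul_le_mul_of_nonneg_left hψ.sum_sq (sq_nonneg θ)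
        have h4 : (2 : ℝ) ^ n * θ ^ 2 ≤ 2 ^ n * θ ^ 2 * n := le_mul_of_one_le_right (by positivity) hn'
        have h5 : 0 ≤ (2 : ℝ) ^ n * θ ^ 2 := by positivity
        nlinarith

lemma sum_pathSum_le {n : ℕ} (hn : 1 ≤ n) {ψ : (Fin n → Bool) → ℝ} (hψ : Centered ψ)
    {θ : ℝ} (hθ0 : 0 ≤ θ) (hθ : n * θ ≤ 4 / 5) (k : ℕ) :
    ∑ x, pathSum (fun x => Real.exp (θ * ψ x)) k x
      ≤ n ^ k * 2 ^ n * (1 + 2 / 5 * n * θ ^ 2) ^ (k + 1) := by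
  set K : ℝ := 1 + 2 / 5 * n * θ ^ 2 with hK
  have hKpos : 0 < K := by positivity
  set F := pathSum (fun x => Real.exp (θ * ψ x)) k
  have hw := weighted_pathSum_le hn hψ hθ0 hθ k
  have he := sum_exp_le hn hψ hθ0 hθ
  rw [← hK] at hw he
  set G := ∑ x, Real.exp (θ * ψ x) with hG
  have hG0 : 0 ≤ G := Finset.sum_nonneg fun x _ => (Real.exp_pos _).le
  -- Cauchy–Schwarz for `F = e^{θψ/2} · e^{-θψ/2} F`
  have hcs : (∑ x, F x) ^ 2 ≤ G * ∑ x, Real.exp (-(θ * ψ x)) * F x ^ 2 := by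
    have := Finset.sum_mul_sq_le_sq_mul_sq Finset.univ
      (fun x => Real.exp (θ * ψ x / 2)) (fun x => Real.exp (-(θ * ψ x / 2)) * F x)
    have e1 : ∀ x, Real.exp (θ * ψ x / 2) * (Real.exp (-(θ * ψ x / 2)) * F x) = F x := fun x => by
      rw [← mul_assoc, ← Real.exp_add]; simp
    have e2 : ∀ x, Real.exp (θ * ψ x / 2) ^ 2 = Real.exp (θ * ψ x) := fun x => by
      rw [← Real.exp_nat_mul]; congr 1; push_cast; ring
    have e3 : ∀ x, (Real.exp (-(θ * ψ x / 2)) * F x) ^ 2 = Real.exp (-(θ * ψ x)) * F x ^ 2 :=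
      fun x => by
        rw [mul_pow, ← Real.exp_nat_mul]; congr 2; push_cast; ring
    simpa only [e1, e2, e3] using this
  have h1 : (∑ x, F x) ^ 2 ≤ ((n * K) ^ k * G) ^ 2 := by
    refine hcs.trans ((mul_le_mul_of_nonneg_left hw hG0).trans (le_of_eq ?_))
    ring
  have h2 := abs_le_of_sq_le_sq' h1 (by positivity)
  calc _ ≤ (n * K) ^ k * G := h2.2
    _ ≤ (n * K) ^ k * (2 ^ n * K) := by gcongr
    _ = _ := by ring

/-! ### Concentration and the union bound -/

/-- The Chernoff bound, with the choice `θ = (4/5) ε / n`. -/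
lemma tail_card_le {n m : ℕ} (hn : 1 ≤ n) (hm1 : 1 ≤ m) {ψ : (Fin n → Bool) → ℝ}
    (hψ : Centered ψ) {ε : ℝ} (hε0 : 0 < ε) (hε1 : ε ≤ 1) :
    ((Finset.univ.filter fun ω : (Fin n → Bool) × (Fin m → Fin n) =>
        m * ε < ∑ t ∈ Finset.range m, ψ (walkOf hm1 ω t)).card : ℝ)
      ≤ Real.exp (-(m * ε ^ 2 / (2 * n))) *
        Fintype.card ((Fin n → Bool) × (Fin m → Fin n)) := by
  obtain ⟨k, rfl⟩ : ∃ k, m = k + 1 := ⟨m - 1, by omega⟩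
  have hnpos : (0 : ℝ) < n := by exact_mod_cast hn
  set θ : ℝ := 4 / 5 * ε / n with hθdef
  have hθ0 : 0 ≤ θ := by positivity
  have hnθ : n * θ = 4 / 5 * ε := by rw [hθdef]; field_simp
  have hθ : n * θ ≤ 4 / 5 := by rw [hnθ]; linarith
  set M : ℝ := ((k + 1 : ℕ) : ℝ) with hM
  set s := Finset.univ.filter fun ω : (Fin n → Bool) × (Fin (k + 1) → Fin n) =>
        M * ε < ∑ t ∈ Finset.range (k + 1), ψ (walkOf hm1 ω t) with hs
  have hmarkov : (s.card : ℝ) * Real.exp (θ * (M * ε))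
      ≤ n * ∑ x, pathSum (fun x => Real.exp (θ * ψ x)) k x := by
    rw [← sum_walkOf hm1, ← nsmul_eq_mul, ← Finset.sum_const]
    refine (Finset.sum_le_sum fun ω hω => ?_).trans
      (Finset.sum_le_sum_of_subset_of_nonneg (Finset.subset_univ s) fun ω _ _ =>
        Finset.prod_nonneg fun t _ => (Real.exp_pos _).le)
    rw [← Real.exp_sum, ← Finset.mul_sum]
    exact Real.exp_le_exp.mpr
      (mul_le_mul_of_nonneg_left (Finset.mem_filter.mp hω).2.le hθ0)
  have hp := sum_pathSum_le hn hψ hθ0 hθ k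
  have hKexp : (1 + 2 / 5 * n * θ ^ 2) ^ (k + 1) ≤ Real.exp (M * (2 / 5 * n * θ ^ 2)) := by
    rw [hM, Real.exp_nat_mul]
    gcongr
    linarith [Real.add_one_le_exp (2 / 5 * n * θ ^ 2)]
  have hcard : (Fintype.card ((Fin n → Bool) × (Fin (k + 1) → Fin n)) : ℝ) = n ^ (k + 1) * 2 ^ n := by
    simp only [Fintype.card_prod, Fintype.card_fun, Fintype.card_bool, Fintype.card_fin]
    push_cast
    ring
  rw [hcard]
  have hexp : M * (2 / 5 * n * θ ^ 2) ≤ -(M * ε ^ 2 / (2 * n)) + θ * (M * ε) := by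
    have : -(M * ε ^ 2 / (2 * n)) + θ * (M * ε) - M * (2 / 5 * n * θ ^ 2)
        = 11 / 250 * (M * ε ^ 2 / n) := by
      rw [hθdef]; field_simp; ring
    have : 0 ≤ 11 / 250 * (M * ε ^ 2 / n) := by positivity
    linarith
  refine le_of_mul_le_mul_right ?_ (Real.exp_pos (θ * (M * ε)))
  calc (s.card : ℝ) * Real.exp (θ * (M * ε))
      ≤ n * (n ^ k * 2 ^ n * Real.exp (M * (2 / 5 * n * θ ^ 2))) :=
        hmarkov.trans (mul_le_mul_of_nonneg_left (hp.trans (by gcongr)) hnpos.le)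
    _ ≤ n * (n ^ k * 2 ^ n * Real.exp (-(M * ε ^ 2 / (2 * n)) + θ * (M * ε))) := by gcongr
    _ = _ := by rw [Real.exp_add]; ring

/-- The centred indicator of disagreement, `1[h ≠ f] - Δ(h, f)`. -/
def disagree {n : ℕ} (f h : (Fin n → Bool) → Bool) (x : Fin n → Bool) : ℝ :=
  (if h x ≠ f x then 1 else 0) - cubeDist h f

lemma cubeDist_eq {n : ℕ} (f h : (Fin n → Bool) → Bool) :
    ∑ x, (if h x ≠ f x then (1 : ℝ) else 0) = 2 ^ n * cubeDist h f := by
  rw [Finset.sum_boole, cubeDist]; field_simp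

lemma cubeDist_mem {n : ℕ} (f h : (Fin n → Bool) → Bool) :
    0 ≤ cubeDist h f ∧ cubeDist h f ≤ 1 := by
  refine ⟨by unfold cubeDist; positivity, ?_⟩
  unfold cubeDist
  rw [div_le_one (by positivity)]
  have := Finset.card_filter_le (Finset.univ : Finset (Fin n → Bool)) (fun z => h z ≠ f z)
  simp only [Finset.card_univ, Fintype.card_fun, Fintype.card_bool, Fintype.card_fin] at this
  exact_mod_cast this

lemma centered_disagree {n : ℕ} (f h : (Fin n → Bool) → Bool) : Centered (disagree f h) := by
  obtain ⟨hp0, hp1⟩ := cubeDist_mem f h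
  have hs := cubeDist_eq f h
  refine ⟨?_, fun x => ?_, ?_⟩
  · simp only [disagree, Finset.sum_sub_distrib, hs]; simp
  · rw [abs_le]; unfold disagree; split_ifs <;> constructor <;> linarith
  · set p := cubeDist h f
    have : ∑ x, disagree f h x ^ 2
        = ∑ x, ((1 - 2 * p) * (if h x ≠ f x then (1 : ℝ) else 0) + p ^ 2) :=
      Finset.sum_congr rfl fun x _ => by
        simp only [disagree]; split_ifs <;> ring
    rw [this, Finset.sum_add_distrib, ← Finset.mul_sum, hs]
    simp only [Finset.sum_const, Finset.card_univ, Fintype.card_fun, Fintype.card_bool,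
      Fintype.card_fin, nsmul_eq_mul, Nat.cast_pow, Nat.cast_ofNat]
    have h2 : (0 : ℝ) < 2 ^ n := by positivity
    nlinarith [mul_nonneg h2.le (sq_nonneg (p - 1 / 2))]

lemma Centered.neg {n : ℕ} {ψ : (Fin n → Bool) → ℝ} (hψ : Centered ψ) :
    Centered (fun x => -ψ x) :=
  ⟨by simp [hψ.sum_zero], fun x => by simpa using hψ.abs_le x, by simpa using hψ.sum_sq⟩

lemma sum_disagree {n m : ℕ} (hm1 : 1 ≤ m) (f h : (Fin n → Bool) → Bool)
    (ω : (Fin n → Bool) × (Fin m → Fin n)) :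
    ∑ t ∈ Finset.range m, disagree f h (walkOf hm1 ω t)
      = m * (sampleDist hm1 f h ω - cubeDist h f) := by
  have : (m : ℝ) ≠ 0 := by positivity
  simp only [disagree, Finset.sum_sub_distrib, Finset.sum_boole, sampleDist]
  simp
  field_simp

lemma sampleDist_mem {n m : ℕ} (hm1 : 1 ≤ m) (f h : (Fin n → Bool) → Bool)
    (ω : (Fin n → Bool) × (Fin m → Fin n)) :
    0 ≤ sampleDist hm1 f h ω ∧ sampleDist hm1 f h ω ≤ 1 := by
  refine ⟨by unfold sampleDist; positivity, ?_⟩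
  unfold sampleDist
  have hm : (0 : ℝ) < m := by exact_mod_cast hm1
  rw [one_div, inv_mul_le_iff₀ hm, mul_one]
  exact_mod_cast (Finset.card_filter_le _ _).trans (Finset.card_range m).le

/-- The two-sided tail bound for a single hypothesis. For `ε > 1` no deviation is possible. -/
lemma bad_card_le {n m : ℕ} (hn : 1 ≤ n) (hm1 : 1 ≤ m) (f h : (Fin n → Bool) → Bool)
    {ε : ℝ} (hε0 : 0 < ε) :
    ((Finset.univ.filter fun ω : (Fin n → Bool) × (Fin m → Fin n) =>
        ε < |sampleDist hm1 f h ω - cubeDist h f|).card : ℝ)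
      ≤ 2 * Real.exp (-(m * ε ^ 2 / (2 * n))) *
        Fintype.card ((Fin n → Bool) × (Fin m → Fin n)) := by
  rcases le_or_gt ε 1 with hε1 | hε1
  · have hψ := centered_disagree f h
    have h1 := tail_card_le hn hm1 hψ hε0 hε1
    have h2 := tail_card_le hn hm1 hψ.neg hε0 hε1
    have hm : (0 : ℝ) < m := by exact_mod_cast hm1
    simp only [Finset.sum_neg_distrib, sum_disagree, ← mul_neg, mul_lt_mul_iff_right₀ hm] at h1 h2
    have h3 := (Finset.card_le_card (fun ω hω => by
      simp only [Finset.mem_union, Finset.mem_filter, Finset.mem_univ, true_and] at hω ⊢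
      exact lt_abs.mp hω :
        (Finset.univ.filter fun ω : (Fin n → Bool) × (Fin m → Fin n) =>
          ε < |sampleDist hm1 f h ω - cubeDist h f|) ⊆
        (Finset.univ.filter fun ω => ε < sampleDist hm1 f h ω - cubeDist h f) ∪
        (Finset.univ.filter fun ω => ε < -(sampleDist hm1 f h ω - cubeDist h f)))).trans
      (Finset.card_union_le _ _)
    have h4 : ((Finset.univ.filter fun ω : (Fin n → Bool) × (Fin m → Fin n) =>
        ε < |sampleDist hm1 f h ω - cubeDist h f|).card : ℝ) ≤ _ := Nat.cast_le.mpr h3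
    push_cast at h4 ⊢
    linarith
  · rw [Finset.filter_false_of_mem]
    · simp only [Finset.card_empty, Nat.cast_zero]; positivity
    · intro ω _
      have := cubeDist_mem f h
      have := sampleDist_mem hm1 f h ω
      rw [not_lt, abs_le]
      constructor <;> linarith

/-- for a finite class `C` of `±1`-valued functions, an arbitrary labeling
function `f`, `N = ⌈n ln(n|C|/δ)⌉` and `m ≥ (2N/ε²) ln(2N|C|/δ)`, with probability at least
`1 − δ` over the labeled random walk of length `m`, every `h ∈ C` satisfies
`|Δ(h,S) − Δ(h,f)| ≤ ε`. -/
theorem stmt9 {n m : ℕ} (hn : 1 ≤ n) (hm1 : 1 ≤ m)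
    (C : Finset ((Fin n → Bool) → Bool)) (f : (Fin n → Bool) → Bool)
    (ε δ : ℝ) (hε : 0 < ε) (hδ : 0 < δ)
    (N : ℝ) (hN : N = (⌈(n : ℝ) * Real.log ((n : ℝ) * C.card / δ)⌉ : ℤ))
    (hm : (m : ℝ) ≥ 2 * N / ε ^ 2 * Real.log (2 * N * C.card / δ)) :
    (1 : ℝ) - δ ≤
      ({ω : (Fin n → Bool) × (Fin m → Fin n) |
          ∀ h ∈ C, |sampleDist hm1 f h ω - cubeDist h f| ≤ ε}.ncard : ℝ) /
        (Fintype.card ((Fin n → Bool) × (Fin m → Fin n)) : ℝ) := by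
    classical
  set T : ℝ := (Fintype.card ((Fin n → Bool) × (Fin m → Fin n)) : ℝ) with hT
  have : Nonempty (Fin n) := ⟨⟨0, hn⟩⟩
  have hTpos : 0 < T := by rw [hT]; exact_mod_cast Fintype.card_pos
  rw [le_div_iff₀ hTpos]
  rcases le_or_gt 1 δ with hδ1 | hδ1
  · exact (mul_nonpos_of_nonpos_of_nonneg (by linarith) hTpos.le).trans (Nat.cast_nonneg _)
  set bad : ((Fin n → Bool) → Bool) → Finset ((Fin n → Bool) × (Fin m → Fin n)) := fun h =>
    Finset.univ.filter fun ω => ε < |sampleDist hm1 f h ω - cubeDist h f| with hbad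
  have hset : {ω : (Fin n → Bool) × (Fin m → Fin n) |
      ∀ h ∈ C, |sampleDist hm1 f h ω - cubeDist h f| ≤ ε} = ↑((C.biUnion bad)ᶜ) := by
    ext ω
    simp [hbad]
  rw [hset, Set.ncard_coe_finset]
  have hcompl : (((C.biUnion bad)ᶜ.card : ℕ) : ℝ) = T - ((C.biUnion bad).card : ℝ) := by
    rw [Finset.card_compl, Nat.cast_sub (Finset.card_le_univ _)]
  rw [hcompl]
  suffices hmain : ((C.biUnion bad).card : ℝ) ≤ δ * T by linarith
  rcases C.eq_empty_or_nonempty with rfl | hC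
  · simp; positivity
  have hc : (1 : ℝ) ≤ C.card := by exact_mod_cast hC.card_pos
  have hn' : (1 : ℝ) ≤ n := by exact_mod_cast hn
  have hnpos : (0 : ℝ) < n := by linarith
  -- `n log (n|C|/δ) > n log n ≥ n - 1`, hence `N ≥ n` after rounding up
  have hNn : (n : ℝ) ≤ N := by
    have hlt : (n : ℝ) < n * C.card / δ := by
      rw [lt_div_iff₀ hδ]; nlinarith
    have h1 := Real.log_lt_log hnpos hlt
    have h2 := Real.one_sub_inv_le_log_of_pos hnpos
    have h3 : (n : ℝ) - 1 < n * Real.log (n * C.card / δ) := by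
      calc (n : ℝ) - 1 = n * (1 - (n : ℝ)⁻¹) := by field_simp
        _ < _ := by gcongr; linarith
    have h4 : ((n : ℤ) - 1 : ℤ) < ⌈(n : ℝ) * Real.log (n * C.card / δ)⌉ := by
      rw [Int.lt_ceil]; push_cast; exact h3
    have h5 : (n : ℤ) ≤ ⌈(n : ℝ) * Real.log (n * C.card / δ)⌉ := by omega
    rw [hN]; exact_mod_cast h5
  have hN1 : 1 ≤ N := hn'.trans hNn
  have hlog : Real.log (2 * C.card / δ) ≤ m * ε ^ 2 / (2 * n) := by
    have hone : 1 ≤ 2 * C.card / δ := by rw [le_div_iff₀ hδ]; linarith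
    have hmono : Real.log (2 * C.card / δ) ≤ Real.log (2 * N * C.card / δ) := by
      refine Real.log_le_log (by linarith) ?_
      gcongr
      linarith
    have hl0 := Real.log_nonneg hone
    have h1 : 2 * N * Real.log (2 * N * C.card / δ) ≤ m * ε ^ 2 := by
      have hε2 : 0 < ε ^ 2 := by positivity
      have := mul_le_mul_of_nonneg_right hm hε2.le
      calc _ = 2 * N / ε ^ 2 * Real.log (2 * N * C.card / δ) * ε ^ 2 := by field_simp
        _ ≤ _ := this
    rw [le_div_iff₀ (by positivity)]
    calc Real.log (2 * C.card / δ) * (2 * n)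
        ≤ Real.log (2 * N * C.card / δ) * (2 * N) := by
          apply mul_le_mul hmono (by linarith) (by linarith) (hl0.trans hmono)
      _ ≤ _ := by linarith
  have hexp : Real.exp (-(m * ε ^ 2 / (2 * n))) ≤ δ / (2 * C.card) := by
    have hpos : 0 < 2 * C.card / δ := by positivity
    calc _ ≤ Real.exp (-Real.log (2 * C.card / δ)) := Real.exp_le_exp.mpr (by linarith)
      _ = δ / (2 * C.card) := by rw [Real.exp_neg, Real.exp_log hpos, inv_div]
  calc ((C.biUnion bad).card : ℝ) ≤ ∑ h ∈ C, ((bad h).card : ℝ) := by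
        exact_mod_cast Finset.card_biUnion_le
    _ ≤ ∑ _h ∈ C, 2 * (δ / (2 * C.card)) * T := by
        refine Finset.sum_le_sum fun h _ => (bad_card_le hn hm1 f h hε).trans ?_
        gcongr
    _ = δ * T := by
        rw [Finset.sum_const, nsmul_eq_mul]; field_simp
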